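/- arXiv:1701.06244 — 2 statements merged into one kernel-verified Lean document; each statement's English description precedes it below -/
import Mathlib

section
/- Let p ∈ ℕ ∪ {∞}. The canonical factorization of morphisms of □_p is unique: if two composites of the form (degeneracies) ∘ (face maps), each with the second arguments of the face maps strictly decreasing and the second arguments of the degeneracies non-increasing when read in composition order (from right to left), are equal as morphisms l₁ → l₂ of □, then they consist of the same list of face maps (same lengths, same second arguments, and same error-value labels ⋆ ∈ Bool) and the same list of degeneracies. In other words, the factorization of the preceding statement is a canonical form for each morphism of □_p. -/
/-- Kleisli composition with error propagation: `(kcomp g f) i = g j` if `f i = Sum.inl j`,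
and `Sum.inr ⋆` if `f i = Sum.inr ⋆`. -/
def kcomp {l₁ l₂ l₃ : ℕ} (g : Fin l₂ → Fin l₃ ⊕ Bool) (f : Fin l₁ → Fin l₂ ⊕ Bool) :
    Fin l₁ → Fin l₃ ⊕ Bool := fun i =>
  match f i with
  | Sum.inl j => g j
  | Sum.inr b => Sum.inr b

/-- The face map `f_⋆(l,k) : l+1 → l` in the category `□`. -/
def faceMap (b : Bool) (l k : ℕ) (hk : k ≤ l) : Fin (l + 1) → Fin l ⊕ Bool := fun i =>
  if h1 : (i : ℕ) < k then Sum.inl ⟨i, by omega⟩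
  else if h2 : (i : ℕ) = k then Sum.inr b
  else Sum.inl ⟨(i : ℕ) - 1, by have := i.isLt; omega⟩

/-- The degeneracy `d(l,k) : l → l+1` in the category `□`. -/
def degenMap (l k : ℕ) : Fin l → Fin (l + 1) ⊕ Bool := fun i =>
  if (i : ℕ) < k then Sum.inl ⟨i, by have := i.isLt; omega⟩
  else Sum.inl ⟨(i : ℕ) + 1, by have := i.isLt; omega⟩

/-- Membership in the subcategory `□_p` of `□` (for `p ∈ ℕ ∪ {∞}`): `BoxP p l₁ l₂ h` says
that `h : Fin l₁ → Fin l₂ ⊕ Bool` is a morphism `l₁ → l₂` of `□_p`, i.e. is generated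
under identities and composition by the face maps `f_⋆(l,k)` for `⋆ ∈ Bool`, `k ≤ l < p`
and the degeneracies `d(l,k)` for `k ≤ l < p`. -/
inductive BoxP (p : ℕ∞) : ∀ (l₁ l₂ : ℕ), (Fin l₁ → Fin l₂ ⊕ Bool) → Prop
  | id (l : ℕ) (hl : (l : ℕ∞) ≤ p) : BoxP p l l Sum.inl
  | face (b : Bool) (l k : ℕ) (hk : k ≤ l) (hl : (l : ℕ∞) < p) :
      BoxP p (l + 1) l (faceMap b l k hk)
  | degen (l k : ℕ) (hk : k ≤ l) (hl : (l : ℕ∞) < p) :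
      BoxP p l (l + 1) (degenMap l k)
  | comp {l₁ l₂ l₃ : ℕ} {f : Fin l₁ → Fin l₂ ⊕ Bool} {g : Fin l₂ → Fin l₃ ⊕ Bool} :
      BoxP p l₁ l₂ f → BoxP p l₂ l₃ g → BoxP p l₁ l₃ (kcomp g f)

/-- `FaceComp p l₁ l₂ s L` says that `s : l₁ → l₂` is the composite of the list `L` of face
maps of `□_p`, where `L` records, in order of application (right to left in composition
order), the labels `⋆ ∈ Bool` and second arguments `k` of the face maps. -/
inductive FaceComp (p : ℕ∞) : ∀ (l₁ l₂ : ℕ), (Fin l₁ → Fin l₂ ⊕ Bool) → List (Bool × ℕ) → Prop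
  | nil (l : ℕ) (hl : (l : ℕ∞) ≤ p) : FaceComp p l l Sum.inl []
  | cons {l m : ℕ} {f : Fin l → Fin m ⊕ Bool} {L : List (Bool × ℕ)}
      (b : Bool) (k : ℕ) (hk : k ≤ l) (hl : (l : ℕ∞) < p) :
      FaceComp p l m f L → FaceComp p (l + 1) m (kcomp f (faceMap b l k hk)) ((b, k) :: L)

/-- `DegenComp p l₁ l₂ ι L` says that `ι : l₁ → l₂` is the composite of the list `L` of
degeneracies of `□_p`, where `L` records, in order of application (right to left in
composition order), the second arguments `k` of the degeneracies. -/
inductive DegenComp (p : ℕ∞) : ∀ (l₁ l₂ : ℕ), (Fin l₁ → Fin l₂ ⊕ Bool) → List ℕ → Prop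
  | nil (l : ℕ) (hl : (l : ℕ∞) ≤ p) : DegenComp p l l Sum.inl []
  | cons {m l : ℕ} {g : Fin m → Fin l ⊕ Bool} {L : List ℕ}
      (k : ℕ) (hk : k ≤ l) (hl : (l : ℕ∞) < p) :
      DegenComp p m l g L → DegenComp p m (l + 1) (kcomp (degenMap l k) g) (L ++ [k])

/-! Both lists can be read off the composite. A composite `s` of face maps with strictly decreasing
second arguments satisfies `s k = Sum.inr b` exactly when `(b, k)` is in the list, and a strictly
decreasing list is determined by its set of members. A composite of degeneracies with
non-increasing second arguments sends `i` to `i + #{k | k ≤ i}`, counting the `k` in the list with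
multiplicity, and a non-increasing list is determined by these counts and its length. Since
degeneracies produce no errors, `ι ∘ s` has the errors of `s`; since `s` is onto the non-error
values, it can be cancelled on the right. -/

theorem eq_of_pairwise_ge_of_countP_le_eq {α : Type*} [LinearOrder α] {L L' : List α}
    (hL : L.Pairwise (· ≥ ·)) (hL' : L'.Pairwise (· ≥ ·))
    (h : ∀ a, L.countP (· ≤ a) = L'.countP (· ≤ a)) : L = L' := by
  induction L generalizing L' with
  | nil =>
    cases L' with
    | nil => rfl
    | cons a' L' => simpa using h a'
  | cons a L ih =>
    cases L' with
    | nil => simpa using h a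
    | cons a' L' =>
      obtain ⟨le_a, L_sorted⟩ := List.pairwise_cons.mp hL
      obtain ⟨le_a', L'_sorted⟩ := List.pairwise_cons.mp hL'
      have count_head : (a :: L).countP (· ≤ a) = (a :: L).length := by
        simpa [List.countP_eq_length] using le_a
      have count_head' : (a' :: L').countP (· ≤ a') = (a' :: L').length := by
        simpa [List.countP_eq_length] using le_a'
      have length_eq : (a :: L).length = (a' :: L').length := le_antisymm
        (count_head ▸ h a ▸ List.countP_le_length)
        (count_head' ▸ h a' ▸ List.countP_le_length)
      have head_le : a' ≤ a := by
        have := List.countP_eq_length.mp ((h a).symm.trans (count_head.trans length_eq))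
        simpa using this a' List.mem_cons_self
      have head_ge : a ≤ a' := by
        have := List.countP_eq_length.mp ((h a').trans (count_head'.trans length_eq.symm))
        simpa using this a List.mem_cons_self
      obtain rfl : a = a' := le_antisymm head_ge head_le
      rw [ih L_sorted L'_sorted fun x => by simpa [List.countP_cons] using h x]

section kcomp

variable {a b c : ℕ} {g : Fin b → Fin c ⊕ Bool} {f : Fin a → Fin b ⊕ Bool} {i : Fin a}

theorem kcomp_apply_of_eq_inl {j : Fin b} (h : f i = Sum.inl j) : kcomp g f i = g j := by
  simp only [kcomp, h]

theorem kcomp_apply_of_eq_inr {t : Bool} (h : f i = Sum.inr t) : kcomp g f i = Sum.inr t := by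
  simp only [kcomp, h]

theorem kcomp_eq_inr_iff (hg : ∀ j, ∃ k, g j = Sum.inl k) {t : Bool} :
    kcomp g f i = Sum.inr t ↔ f i = Sum.inr t := by
  cases hf : f i with
  | inl j =>
    obtain ⟨k, hk⟩ := hg j
    simp [kcomp_apply_of_eq_inl hf, hk]
  | inr u => simp only [kcomp_apply_of_eq_inr hf, Sum.inr.injEq]

theorem kcomp_right_cancel {g' : Fin b → Fin c ⊕ Bool} (hf : ∀ j, ∃ i, f i = Sum.inl j)
    (h : kcomp g f = kcomp g' f) : g = g' := by
  funext j
  obtain ⟨i, hi⟩ := hf j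
  rw [← kcomp_apply_of_eq_inl (g := g) hi, h, kcomp_apply_of_eq_inl hi]

end kcomp

section faceMap

variable {l k : ℕ} (b : Bool) (hk : k ≤ l)

theorem faceMap_castSucc {j : Fin l} (hj : (j : ℕ) < k) :
    faceMap b l k hk j.castSucc = Sum.inl j := by
  simp [faceMap, hj]

theorem faceMap_self : faceMap b l k hk ⟨k, Nat.lt_succ_of_le hk⟩ = Sum.inr b := by
  simp [faceMap]

theorem faceMap_succ {j : Fin l} (hj : k ≤ (j : ℕ)) : faceMap b l k hk j.succ = Sum.inl j := by
  have not_lt : ¬ (j : ℕ) + 1 < k := by omega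
  have ne : (j : ℕ) + 1 ≠ k := by omega
  simp [faceMap, not_lt, ne]

theorem exists_faceMap_eq_inl (j : Fin l) : ∃ i, faceMap b l k hk i = Sum.inl j := by
  rcases lt_or_ge (j : ℕ) k with hj | hj
  · exact ⟨j.castSucc, faceMap_castSucc b hk hj⟩
  · exact ⟨j.succ, faceMap_succ b hk hj⟩

end faceMap

namespace FaceComp

variable {p : ℕ∞} {l m : ℕ} {s : Fin l → Fin m ⊕ Bool} {L : List (Bool × ℕ)}

theorem add_length (hs : FaceComp p l m s L) : m + L.length = l := by
  induction hs with
  | nil => rfl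
  | cons _ _ _ _ _ ih => rw [List.length_cons, ← add_assoc, ih]

theorem morphism_unique {s' : Fin l → Fin m ⊕ Bool} (hs : FaceComp p l m s L)
    (hs' : FaceComp p l m s' L) : s = s' := by
  induction hs with
  | nil => cases hs'; rfl
  | cons _ _ _ _ _ ih =>
    cases hs' with
    | cons _ _ _ _ hs' => rw [ih hs']

theorem exists_eq_inl (hs : FaceComp p l m s L) (j : Fin m) : ∃ i, s i = Sum.inl j := by
  induction hs with
  | nil => exact ⟨j, rfl⟩
  | cons b k hk _ _ ih =>
    obtain ⟨i', hi'⟩ := ih j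
    obtain ⟨i, hi⟩ := exists_faceMap_eq_inl b hk i'
    exact ⟨i, (kcomp_apply_of_eq_inl hi).trans hi'⟩

theorem mem_iff (hs : FaceComp p l m s L) (hL : (L.map Prod.snd).Pairwise (· > ·))
    {b : Bool} {k : ℕ} : (b, k) ∈ L ↔ ∃ h : k < l, s ⟨k, h⟩ = Sum.inr b := by
  induction hs generalizing k with
  | nil => simp
  | @cons l m f L b₀ k₀ hk₀ _ _ ih =>
    obtain ⟨hlt, hL⟩ := List.pairwise_cons.mp hL
    replace hlt {k : ℕ} (h : (b, k) ∈ L) : k < k₀ := hlt k (List.mem_map_of_mem h)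
    rcases lt_trichotomy k k₀ with hk | rfl | hk
    · have face_eq : faceMap b₀ l k₀ hk₀ ⟨k, by omega⟩ = Sum.inl ⟨k, by omega⟩ :=
        faceMap_castSucc b₀ hk₀ (j := ⟨k, by omega⟩) hk
      have hkl : k < l := by omega
      simp [ih hL, kcomp_apply_of_eq_inl face_eq, hk.ne, hkl, hkl.trans (Nat.lt_succ_self l)]
    · have not_mem : (b, k) ∉ L := fun h => (hlt h).false
      simp [kcomp_apply_of_eq_inr (faceMap_self b₀ hk₀), not_mem, Nat.lt_succ_of_le hk₀, eq_comm]
    · obtain ⟨k, rfl⟩ := Nat.exists_eq_succ_of_ne_zero hk.ne_bot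
      have not_mem : (b, k + 1) ∉ L := fun h => (hlt h).not_gt hk
      have not_mem_pred : (b, k) ∉ L := fun h => (hlt h).not_ge (Nat.le_of_lt_succ hk)
      have no_error (h : k + 1 < l + 1) :
          kcomp f (faceMap b₀ l k₀ hk₀) ⟨k + 1, h⟩ ≠ Sum.inr b := by
        have face_eq : faceMap b₀ l k₀ hk₀ ⟨k + 1, h⟩ = Sum.inl ⟨k, by omega⟩ :=
          faceMap_succ b₀ hk₀ (j := ⟨k, by omega⟩) (Nat.le_of_lt_succ hk)
        rw [kcomp_apply_of_eq_inl face_eq]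
        exact fun h => not_mem_pred ((ih hL).mpr ⟨_, h⟩)
      simp [not_mem, hk.ne', no_error]

theorem list_eq_of_forall_eq_inr_iff {m' : ℕ} {s' : Fin l → Fin m' ⊕ Bool} {L' : List (Bool × ℕ)}
    (hs : FaceComp p l m s L) (hs' : FaceComp p l m' s' L')
    (hL : (L.map Prod.snd).Pairwise (· > ·)) (hL' : (L'.map Prod.snd).Pairwise (· > ·))
    (h : ∀ i b, s i = Sum.inr b ↔ s' i = Sum.inr b) : L = L' := by
  have mem_iff_mem : ∀ x, x ∈ L ↔ x ∈ L' := fun ⟨b, k⟩ => by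
    simp only [hs.mem_iff hL, hs'.mem_iff hL', h]
  have : Std.Antisymm fun x y : Bool × ℕ => x.2 > y.2 := ⟨fun _ _ h h' => (h.asymm h').elim⟩
  have : Std.Irrefl fun x y : Bool × ℕ => x.2 > y.2 := ⟨fun x => lt_irrefl x.2⟩
  exact (List.pairwise_map.mp hL).eq_of_mem_iff (List.pairwise_map.mp hL') mem_iff_mem

end FaceComp

section degenMap

variable {l k : ℕ} {i : Fin l}

theorem degenMap_of_lt (h : (i : ℕ) < k) : degenMap l k i = Sum.inl i.castSucc := by
  rw [degenMap, if_pos h]; rfl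

theorem degenMap_of_le (h : k ≤ (i : ℕ)) : degenMap l k i = Sum.inl i.succ := by
  rw [degenMap, if_neg h.not_gt]; rfl

end degenMap

namespace DegenComp

variable {p : ℕ∞} {m l : ℕ} {ι : Fin m → Fin l ⊕ Bool} {L : List ℕ}

theorem add_length (hι : DegenComp p m l ι L) : m + L.length = l := by
  induction hι with
  | nil => rfl
  | cons _ _ _ _ ih => rw [List.length_append, List.length_singleton, ← add_assoc, ih]

theorem le_of_mem (hι : DegenComp p m l ι L) (hL : L.Pairwise (· ≥ ·)) {k : ℕ} (hk : k ∈ L) :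
    k ≤ m := by
  induction hι generalizing k with
  | nil => simp at hk
  | @cons _ _ L k₀ hk₀ _ hι ih =>
    simp only [List.pairwise_append, List.mem_singleton, forall_eq] at hL
    rcases List.mem_append.mp hk with hk | hk
    · exact ih hL.1 hk
    · obtain rfl := List.mem_singleton.mp hk
      cases L with
      | nil => simpa [← hι.add_length] using hk₀
      | cons k₁ L => exact (hL.2.2 k₁ List.mem_cons_self).trans (ih hL.1 List.mem_cons_self)

theorem exists_eq_inl_add_countP (hι : DegenComp p m l ι L) (hL : L.Pairwise (· ≥ ·))
    (i : Fin m) : ∃ j, ι i = Sum.inl j ∧ (j : ℕ) = i + L.countP (· ≤ (i : ℕ)) := by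
  induction hι with
  | nil => exact ⟨i, rfl, rfl⟩
  | @cons _ _ L k _ _ _ ih =>
    simp only [List.pairwise_append, List.mem_singleton, forall_eq] at hL
    obtain ⟨j, hj, j_eq⟩ := ih hL.1
    rw [kcomp_apply_of_eq_inl hj]
    rcases le_or_gt k i with hk | hk
    · refine ⟨j.succ, degenMap_of_le (by omega), ?_⟩
      simp [j_eq, hk, add_assoc]
    · have countP_eq_zero : L.countP (· ≤ (i : ℕ)) = 0 := by
        simpa [List.countP_eq_zero] using fun k' hk' => hk.trans_le (hL.2.2 k' hk')
      refine ⟨j.castSucc, degenMap_of_lt (by omega), ?_⟩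
      simp [j_eq, countP_eq_zero, hk]

theorem list_unique {L' : List ℕ} (hι : DegenComp p m l ι L) (hι' : DegenComp p m l ι L')
    (hL : L.Pairwise (· ≥ ·)) (hL' : L'.Pairwise (· ≥ ·)) : L = L' := by
  refine eq_of_pairwise_ge_of_countP_le_eq hL hL' fun n => ?_
  rcases lt_or_ge n m with hn | hn
  · obtain ⟨j, hj, j_eq⟩ := hι.exists_eq_inl_add_countP hL ⟨n, hn⟩
    obtain ⟨j', hj', j'_eq⟩ := hι'.exists_eq_inl_add_countP hL' ⟨n, hn⟩
    obtain rfl : j = j' := Sum.inl.inj (hj.symm.trans hj')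
    exact Nat.add_left_cancel (j_eq.symm.trans j'_eq)
  · have countP_eq_length {L : List ℕ} (hι : DegenComp p m l ι L) (hL : L.Pairwise (· ≥ ·)) :
        L.countP (· ≤ n) = L.length :=
      List.countP_eq_length.mpr fun k hk => decide_eq_true ((hι.le_of_mem hL hk).trans hn)
    rw [countP_eq_length hι hL, countP_eq_length hι' hL']
    exact Nat.add_left_cancel (hι.add_length.trans hι'.add_length.symm)

end DegenComp

/-- Uniqueness of the canonical factorization: two composites of the form
(degeneracies) ∘ (face maps), each with strictly decreasing second arguments of the face maps
and non-increasing second arguments of the degeneracies (read in application order), that are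
equal as morphisms `l₁ → l₂` of `□` consist of the same lists of face maps and degeneracies. -/
theorem boxP_factorization_unique (p : ℕ∞) (l₁ l₂ m m' : ℕ)
    (Lf Lf' : List (Bool × ℕ)) (Ld Ld' : List ℕ)
    (s : Fin l₁ → Fin m ⊕ Bool) (ι : Fin m → Fin l₂ ⊕ Bool)
    (s' : Fin l₁ → Fin m' ⊕ Bool) (ι' : Fin m' → Fin l₂ ⊕ Bool)
    (hs : FaceComp p l₁ m s Lf) (hι : DegenComp p m l₂ ι Ld)
    (hf : (Lf.map Prod.snd).Chain' (· > ·)) (hd : Ld.Chain' (· ≥ ·))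
    (hs' : FaceComp p l₁ m' s' Lf') (hι' : DegenComp p m' l₂ ι' Ld')
    (hf' : (Lf'.map Prod.snd).Chain' (· > ·)) (hd' : Ld'.Chain' (· ≥ ·))
    (heq : kcomp ι s = kcomp ι' s') :
    m = m' ∧ Lf = Lf' ∧ Ld = Ld' := by
  replace hf := List.isChain_iff_pairwise.mp hf
  replace hd := List.isChain_iff_pairwise.mp hd
  replace hf' := List.isChain_iff_pairwise.mp hf'
  replace hd' := List.isChain_iff_pairwise.mp hd'
  have ι_total i : ∃ j, ι i = Sum.inl j := (hι.exists_eq_inl_add_countP hd i).imp fun _ => And.left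
  have ι'_total i : ∃ j, ι' i = Sum.inl j :=
    (hι'.exists_eq_inl_add_countP hd' i).imp fun _ => And.left
  have same_errors i b : s i = Sum.inr b ↔ s' i = Sum.inr b := by
    rw [← kcomp_eq_inr_iff ι_total, heq, kcomp_eq_inr_iff ι'_total]
  obtain rfl : Lf = Lf' := hs.list_eq_of_forall_eq_inr_iff hs' hf hf' same_errors
  obtain rfl : m = m' := Nat.add_right_cancel (hs.add_length.trans hs'.add_length.symm)
  obtain rfl : s = s' := hs.morphism_unique hs'
  obtain rfl : ι = ι' := kcomp_right_cancel hs.exists_eq_inl heq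
  exact ⟨rfl, rfl, hι.list_unique hι' hd hd'⟩
end

section
/- Let p ∈ ℕ ∪ {∞}. Every morphism h : l₁ → l₂ of □_p factors as a surjection followed by an inclusion: h = ι ∘ s where (i) s : l₁ → m is a composite of face maps and is surjective onto non-error values, i.e., for every j ∈ Fin m there exists i ∈ Fin l₁ with s(i) = Sum.inl j, and (ii) ι : m → l₂ is a composite of degeneracies and is error-free and order-preserving injective, i.e., ι = Sum.inl ∘ u for a strictly monotone function u : Fin m → Fin l₂. -/
/-!
A morphism of `□` that is strictly increasing where it takes non-error values is determined by
its errors and by the values it misses. If `h` sends `k` to the error `⋆`, deleting the input `k`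
peels a face map `f_⋆(l,k)` off the right of `h`; once no errors are left, `h` is a strictly
increasing map, and each value `k` that it misses peels a degeneracy `d(l,k)` off the left, until
an identity remains. Strict monotonicity on non-error values holds for the generators and is
stable under composition, so every morphism of `□_p` has it.
-/

/-- The semantic counterpart of membership in `□_p`: `f`, regarded as a partial function undefined
where it takes an error value in `ε`, is strictly increasing on its domain of definition. -/
def StrictMonoOnValues {α β ε : Type*} [LT α] [LT β] (f : α → β ⊕ ε) : Prop :=
  ∀ ⦃i i' : α⦄ ⦃j j' : β⦄, f i = Sum.inl j → f i' = Sum.inl j' → i < i' → j < j'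

theorem strictMonoOnValues_inl_comp_iff {α β ε : Type*} [Preorder α] [Preorder β] {u : α → β} :
    StrictMonoOnValues (Sum.inl ∘ u : α → β ⊕ ε) ↔ StrictMono u := by
  simp [StrictMonoOnValues, StrictMono]

theorem StrictMonoOnValues.comp_strictMono {α β γ ε : Type*} [Preorder α] [Preorder β] [LT γ]
    {f : β → γ ⊕ ε} (hf : StrictMonoOnValues f) {u : α → β} (hu : StrictMono u) :
    StrictMonoOnValues (f ∘ u) :=
  fun _ _ _ _ hj hj' hlt => hf hj hj' (hu hlt)

theorem StrictMonoOnValues.exists_eq_inl_comp {α β ε : Type*} [Preorder α] [Preorder β]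
    {f : α → β ⊕ ε} (hf : StrictMonoOnValues f) (herr : ∀ i b, f i ≠ Sum.inr b) :
    ∃ u : α → β, StrictMono u ∧ f = Sum.inl ∘ u := by
  have hval (i : α) : ∃ j, f i = Sum.inl j := by
    rcases hfi : f i with j | b
    · exact ⟨j, rfl⟩
    · exact (herr i b hfi).elim
  choose u hu using hval
  obtain rfl : f = Sum.inl ∘ u := funext hu
  exact ⟨u, strictMonoOnValues_inl_comp_iff.1 hf, rfl⟩

section kcomp

variable {l₁ l₂ l₃ l₄ : ℕ}

theorem kcomp_assoc (h : Fin l₃ → Fin l₄ ⊕ Bool) (g : Fin l₂ → Fin l₃ ⊕ Bool)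
    (f : Fin l₁ → Fin l₂ ⊕ Bool) : kcomp h (kcomp g f) = kcomp (kcomp h g) f := by
  funext i
  unfold kcomp
  cases f i <;> rfl

theorem kcomp_eq_inl_iff {g : Fin l₂ → Fin l₃ ⊕ Bool} {f : Fin l₁ → Fin l₂ ⊕ Bool}
    {i : Fin l₁} {j : Fin l₃} :
    kcomp g f i = Sum.inl j ↔ ∃ a, f i = Sum.inl a ∧ g a = Sum.inl j := by
  unfold kcomp
  cases f i <;> simp

theorem strictMonoOnValues_kcomp {g : Fin l₂ → Fin l₃ ⊕ Bool} (hg : StrictMonoOnValues g)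
    {f : Fin l₁ → Fin l₂ ⊕ Bool} (hf : StrictMonoOnValues f) :
    StrictMonoOnValues (kcomp g f) := by
  intro i i' j j' hj hj' hlt
  obtain ⟨a, hfa, hga⟩ := kcomp_eq_inl_iff.1 hj
  obtain ⟨a', hfa', hga'⟩ := kcomp_eq_inl_iff.1 hj'
  exact hg hga hga' (hf hfa hfa' hlt)

end kcomp

section generators

variable {l m : ℕ}

theorem faceMap_eq_insertNth (b : Bool) (k : Fin (l + 1)) :
    faceMap b l k k.is_le = k.insertNth (Sum.inr b) Sum.inl := by
  refine Fin.eq_insertNth_iff.2 ⟨by simp [faceMap], funext fun i => ?_⟩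
  simp only [Fin.removeNth, faceMap, Fin.succAbove, Fin.lt_def]
  grind

theorem degenMap_eq_inl_comp_succAbove (k : Fin (l + 1)) :
    degenMap l k = Sum.inl ∘ k.succAbove := by
  funext i
  simp only [degenMap, Function.comp_apply, Fin.succAbove, Fin.lt_def]
  grind

theorem faceMap_eq_inl_iff {b : Bool} {k i : Fin (l + 1)} {j : Fin l} :
    faceMap b l k k.is_le i = Sum.inl j ↔ i = k.succAbove j := by
  rw [faceMap_eq_insertNth]
  cases i using k.succAboveCases <;> simp [(Fin.succAbove_ne k j).symm]

theorem kcomp_faceMap (f : Fin l → Fin m ⊕ Bool) (b : Bool) (k : Fin (l + 1)) :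
    kcomp f (faceMap b l k k.is_le) = k.insertNth (Sum.inr b) f := by
  rw [faceMap_eq_insertNth]
  exact Fin.eq_insertNth_iff.2
    ⟨by simp [kcomp], funext fun i => by simp [kcomp, Fin.removeNth]⟩

theorem kcomp_removeNth_faceMap {h : Fin (l + 1) → Fin m ⊕ Bool} {b : Bool} {k : Fin (l + 1)}
    (hk : h k = Sum.inr b) : kcomp (k.removeNth h) (faceMap b l k k.is_le) = h := by
  rw [kcomp_faceMap, ← hk, Fin.insertNth_self_removeNth]

theorem strictMonoOnValues_faceMap (b : Bool) (k : Fin (l + 1)) :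
    StrictMonoOnValues (faceMap b l k k.is_le) := by
  intro i i' j j' hj hj' hlt
  rw [faceMap_eq_inl_iff] at hj hj'
  subst hj hj'
  exact (Fin.strictMono_succAbove k).lt_iff_lt.1 hlt

theorem strictMonoOnValues_degenMap (k : Fin (l + 1)) : StrictMonoOnValues (degenMap l k) := by
  rw [degenMap_eq_inl_comp_succAbove]
  exact strictMonoOnValues_inl_comp_iff.2 (Fin.strictMono_succAbove k)

end generators

namespace BoxP

variable {p : ℕ∞} {l₁ l₂ : ℕ} {h : Fin l₁ → Fin l₂ ⊕ Bool}

theorem dom_le (hh : BoxP p l₁ l₂ h) : (l₁ : ℕ∞) ≤ p := by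
  induction hh with
  | id _ hl => exact hl
  | face _ _ _ _ hl => exact_mod_cast Order.add_one_le_of_lt hl
  | degen _ _ _ hl => exact hl.le
  | comp _ _ ihf _ => exact ihf

theorem cod_le (hh : BoxP p l₁ l₂ h) : (l₂ : ℕ∞) ≤ p := by
  induction hh with
  | id _ hl => exact hl
  | face _ _ _ _ hl => exact hl.le
  | degen _ _ _ hl => exact_mod_cast Order.add_one_le_of_lt hl
  | comp _ _ _ ihg => exact ihg

theorem strictMonoOnValues (hh : BoxP p l₁ l₂ h) : StrictMonoOnValues h := by
  induction hh with
  | id => exact strictMonoOnValues_inl_comp_iff.2 strictMono_id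
  | face b _ k hk _ => exact strictMonoOnValues_faceMap b ⟨k, Nat.lt_succ_of_le hk⟩
  | degen _ k hk _ => exact strictMonoOnValues_degenMap ⟨k, Nat.lt_succ_of_le hk⟩
  | comp _ _ ihf ihg => exact strictMonoOnValues_kcomp ihg ihf

end BoxP

theorem FaceComp.exists_eq_inl_s9 {p : ℕ∞} {l m : ℕ} {s : Fin l → Fin m ⊕ Bool}
    {L : List (Bool × ℕ)} (hs : FaceComp p l m s L) (j : Fin m) : ∃ i, s i = Sum.inl j := by
  induction hs with
  | nil => exact ⟨j, rfl⟩
  | cons _ k hk _ _ ih =>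
    obtain ⟨i, hi⟩ := ih j
    exact ⟨_, kcomp_eq_inl_iff.2
      ⟨i, (faceMap_eq_inl_iff (k := ⟨k, Nat.lt_succ_of_le hk⟩)).2 rfl, hi⟩⟩

theorem StrictMonoOnValues.exists_faceComp {p : ℕ∞} {l₁ l₂ : ℕ} (hl₁ : (l₁ : ℕ∞) ≤ p)
    {h : Fin l₁ → Fin l₂ ⊕ Bool} (hh : StrictMonoOnValues h) :
    ∃ (m : ℕ) (L : List (Bool × ℕ)) (s : Fin l₁ → Fin m ⊕ Bool) (u : Fin m → Fin l₂),
      FaceComp p l₁ m s L ∧ StrictMono u ∧ h = kcomp (Sum.inl ∘ u) s := by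
  by_cases herr : ∃ k b, h k = Sum.inr b
  · obtain ⟨k, b, hk⟩ := herr
    cases l₁ with
    | zero => exact k.elim0
    | succ l =>
      have hl : (l : ℕ∞) < p := lt_of_lt_of_le (by exact_mod_cast l.lt_succ_self) hl₁
      obtain ⟨m, L, s, u, hs, hu, heq⟩ :=
        (hh.comp_strictMono (Fin.strictMono_succAbove k)).exists_faceComp hl.le
      refine ⟨m, _, _, u, .cons b k k.is_le hl hs, hu, ?_⟩
      rw [kcomp_assoc, ← heq]
      exact (kcomp_removeNth_faceMap hk).symm
  · push Not at herr
    obtain ⟨u, hu, rfl⟩ := hh.exists_eq_inl_comp herr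
    exact ⟨l₁, [], Sum.inl, u, .nil l₁ hl₁, hu, rfl⟩

theorem exists_strictMono_eq_succAbove_comp {α : Type*} [Preorder α] {l : ℕ}
    {u : α → Fin (l + 1)} (hu : StrictMono u) {k : Fin (l + 1)} (hk : ∀ i, u i ≠ k) :
    ∃ v : α → Fin l, StrictMono v ∧ u = k.succAbove ∘ v := by
  choose v hv using fun i => Fin.exists_succAbove_eq (hk i)
  obtain rfl : k.succAbove ∘ v = u := funext hv
  exact ⟨v, fun _ _ hlt => (Fin.strictMono_succAbove k).lt_iff_lt.1 (hu hlt), rfl⟩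

theorem exists_degenComp_of_strictMono {p : ℕ∞} {m l : ℕ} (hl : (l : ℕ∞) ≤ p)
    {u : Fin m → Fin l} (hu : StrictMono u) : ∃ L, DegenComp p m l (Sum.inl ∘ u) L := by
  by_cases hsurj : Function.Surjective u
  · obtain rfl : m = l := Fin.equiv_iff_eq.1 ⟨.ofBijective u ⟨hu.injective, hsurj⟩⟩
    obtain rfl : u = id := (hu.range_inj strictMono_id).1 (by simp [hsurj.range_eq])
    exact ⟨[], .nil m hl⟩
  · obtain ⟨k, hk⟩ : ∃ k, ∀ i, u i ≠ k := by simpa [Function.Surjective] using hsurj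
    cases l with
    | zero => exact k.elim0
    | succ l =>
      have hlp : (l : ℕ∞) < p := lt_of_lt_of_le (by exact_mod_cast l.lt_succ_self) hl
      obtain ⟨v, hv, rfl⟩ := exists_strictMono_eq_succAbove_comp hu hk
      obtain ⟨L, hL⟩ := exists_degenComp_of_strictMono hlp.le hv
      refine ⟨L ++ [(k : ℕ)], ?_⟩
      have hcons := hL.cons k k.is_le hlp
      rwa [degenMap_eq_inl_comp_succAbove] at hcons

/-- Every morphism `h : l₁ → l₂` of `□_p` factors as a surjection followed by an inclusion:
`h = ι ∘ s` where `s` is a composite of face maps that is surjective onto non-error values,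
and `ι` is a composite of degeneracies that is error-free and order-preserving injective,
i.e. `ι = Sum.inl ∘ u` for a strictly monotone `u`. -/
theorem boxP_surj_incl_factorization (p : ℕ∞) (l₁ l₂ : ℕ) (h : Fin l₁ → Fin l₂ ⊕ Bool)
    (hh : BoxP p l₁ l₂ h) :
    ∃ (m : ℕ) (Lf : List (Bool × ℕ)) (Ld : List ℕ)
      (s : Fin l₁ → Fin m ⊕ Bool) (ι : Fin m → Fin l₂ ⊕ Bool),
      FaceComp p l₁ m s Lf ∧ DegenComp p m l₂ ι Ld ∧ h = kcomp ι s ∧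
      (∀ j : Fin m, ∃ i : Fin l₁, s i = Sum.inl j) ∧
      ∃ u : Fin m → Fin l₂, StrictMono u ∧ ι = fun i => Sum.inl (u i) := by
  obtain ⟨m, Lf, s, u, hs, hu, heq⟩ := hh.strictMonoOnValues.exists_faceComp hh.dom_le
  obtain ⟨Ld, hι⟩ := exists_degenComp_of_strictMono hh.cod_le hu
  exact ⟨m, Lf, Ld, s, Sum.inl ∘ u, hs, hι, heq, hs.exists_eq_inl_s9, u, hu, rfl⟩
end
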